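/- For C₀ = C = 1 (Popov case on S²), if s is a rational (holomorphic) function then φ = (1 + |w|²)/(1 + |s(w)|²) · ds/dw satisfies, with h = log|φ|² and Ω = 4/(1+|w|²)², the equation Δ₀h - 2Ω(1 - e^h) = 0 wherever ds/dw ≠ 0. -/

import Mathlib

open Complex

/-- Wirtinger derivative ∂/∂w. -/
noncomputable def dw (f : ℂ → ℂ) (z : ℂ) : ℂ :=
  (1/2 : ℂ) * (fderiv ℝ f z 1 - Complex.I * fderiv ℝ f z Complex.I)

/-- Wirtinger derivative ∂/∂w̄. -/
noncomputable def dwbar (f : ℂ → ℂ) (z : ℂ) : ℂ :=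
  (1/2 : ℂ) * (fderiv ℝ f z 1 + Complex.I * fderiv ℝ f z Complex.I)

/-- `f` has real derivative `v ↦ a v + b conj v` at `z`. -/
def HW (f : ℂ → ℂ) (a b z : ℂ) : Prop :=
  ∃ L : ℂ →L[ℝ] ℂ, HasFDerivAt f L z ∧ ∀ v, L v = a * v + b * (starRingEnd ℂ) v

lemma HW.dw {f : ℂ → ℂ} {a b z : ℂ} (h : HW f a b z) : dw f z = a := by
  obtain ⟨L, hL, h⟩ := h
  simp only [_root_.dw, hL.fderiv, h, map_one, conj_I]
  linear_combination (-a/2 + b/2) * I_mul_I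

lemma HW.dwbar {f : ℂ → ℂ} {a b z : ℂ} (h : HW f a b z) : dwbar f z = b := by
  obtain ⟨L, hL, h⟩ := h
  simp only [_root_.dwbar, hL.fderiv, h, map_one, conj_I]
  linear_combination (a/2 - b/2) * I_mul_I

lemma HW.congr {f : ℂ → ℂ} {a b a' b' z : ℂ} (h : HW f a b z) (ha : a = a') (hb : b = b') :
    HW f a' b' z := by subst ha hb; exact h

lemma HW.const (c z : ℂ) : HW (fun _ => c) 0 0 z :=
  ⟨0, hasFDerivAt_const _ _, by simp⟩

lemma HW.add {f g : ℂ → ℂ} {a b c d z : ℂ} (h : HW f a b z) (k : HW g c d z) :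
    HW (fun x => f x + g x) (a + c) (b + d) z := by
  obtain ⟨L, hL, h⟩ := h
  obtain ⟨M, hM, k⟩ := k
  refine ⟨L + M, hL.add hM, fun v => ?_⟩
  simp only [ContinuousLinearMap.add_apply, h, k]; ring

lemma HW.mul {f g : ℂ → ℂ} {a b c d z : ℂ} (h : HW f a b z) (k : HW g c d z) :
    HW (fun x => f x * g x) (f z * c + g z * a) (f z * d + g z * b) z := by
  obtain ⟨L, hL, h⟩ := h
  obtain ⟨M, hM, k⟩ := k
  refine ⟨_, hL.mul hM, fun v => ?_⟩
  simp only [ContinuousLinearMap.add_apply, ContinuousLinearMap.smul_apply, smul_eq_mul, h, k]; ring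

lemma HW.comp {f g : ℂ → ℂ} {a b d z : ℂ} (h : HW f a b z) (k : HasDerivAt g d (f z)) :
    HW (fun x => g (f x)) (d * a) (d * b) z := by
  obtain ⟨L, hL, h⟩ := h
  refine ⟨_, (k.hasFDerivAt.restrictScalars ℝ).comp z hL, fun v => ?_⟩
  simp [h]; ring

lemma HW.hol {f : ℂ → ℂ} {d z : ℂ} (h : HasDerivAt f d z) : HW f d 0 z := by
  refine ⟨_, h.hasFDerivAt.restrictScalars ℝ, fun v => ?_⟩
  simp; ring

lemma HW.conj {f : ℂ → ℂ} {a b z : ℂ} (h : HW f a b z) :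
    HW (fun x => (starRingEnd ℂ) (f x)) ((starRingEnd ℂ) b) ((starRingEnd ℂ) a) z := by
  obtain ⟨L, hL, h⟩ := h
  refine ⟨_, (conjCLE : ℂ →L[ℝ] ℂ).hasFDerivAt.comp z hL, fun v => ?_⟩
  simp [h]; ring

lemma one_add_ne (z : ℂ) : 1 + z * (starRingEnd ℂ) z ≠ 0 := by
  rw [mul_conj]
  have := normSq_nonneg z
  exact_mod_cast (by positivity : (1 + normSq z) ≠ 0)

lemma HW.log_one {f : ℂ → ℂ} {d z : ℂ} (h : HasDerivAt f d z) :
    ∃ a, HW (fun x => Complex.log (1 + f x * (starRingEnd ℂ) (f x))) a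
      (f z * (starRingEnd ℂ) d * (1 + f z * (starRingEnd ℂ) (f z))⁻¹) z := by
  have h1 := (HW.const 1 z).add ((HW.hol h).mul (HW.hol h).conj)
  have hm : 1 + f z * (starRingEnd ℂ) (f z) ∈ slitPlane := by
    rw [mul_conj]
    have := normSq_nonneg (f z)
    exact_mod_cast ofReal_mem_slitPlane.2 (by positivity : 0 < 1 + normSq (f z))
  exact ⟨_, (h1.comp (hasDerivAt_log hm)).congr rfl (by simp; ring)⟩

lemma HW.log_sq {f : ℂ → ℂ} {d z : ℂ} (h : HasDerivAt f d z) (h0 : f z ≠ 0) :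
    ∃ a, HW (fun x => Complex.log (f x * (starRingEnd ℂ) (f x))) a
      ((starRingEnd ℂ) (d * (f z)⁻¹)) z := by
  have h1 := (HW.hol h).mul (HW.hol h).conj
  have hm : f z * (starRingEnd ℂ) (f z) ∈ slitPlane := by
    rw [mul_conj]
    exact ofReal_mem_slitPlane.2 (normSq_pos.2 h0)
  refine ⟨_, (h1.comp (hasDerivAt_log hm)).congr rfl ?_⟩
  have : (starRingEnd ℂ) (f z) ≠ 0 := by simpa using h0
  simp; field_simp

/-- second derivative of the log term -/
lemma HW.second {f g : ℂ → ℂ} {d e z : ℂ} (h : HasDerivAt f d z) (hg : HasDerivAt g e z)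
    (hd : g z = d) :
    ∃ b, HW (fun x => f x * (starRingEnd ℂ) (g x) * (1 + f x * (starRingEnd ℂ) (f x))⁻¹)
      (d * (starRingEnd ℂ) d * ((1 + f z * (starRingEnd ℂ) (f z)) ^ 2)⁻¹) b z := by
  have hne := one_add_ne (f z)
  have h1 := (HW.const 1 z).add ((HW.hol h).mul (HW.hol h).conj)
  have h2 := h1.comp (hasDerivAt_inv hne)
  have h3 := ((HW.hol h).mul (HW.hol hg).conj).mul h2
  refine ⟨_, h3.congr ?_ rfl⟩
  subst hd
  simp
  field_simp
  ring

lemma HW.congr_ev {f g : ℂ → ℂ} {a b z : ℂ} (h : HW f a b z) (e : g =ᶠ[nhds z] f) :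
    HW g a b z := by
  obtain ⟨L, hL, h⟩ := h
  exact ⟨L, hL.congr_of_eventuallyEq e, h⟩

lemma log_formula (x t p : ℂ) (hp : p ≠ 0) :
    ((Real.log (normSq ((((1 + normSq x) / (1 + normSq t) : ℝ) : ℂ) * p)) : ℝ) : ℂ) =
      2 * Complex.log (1 + x * (starRingEnd ℂ) x) + (-2) * Complex.log (1 + t * (starRingEnd ℂ) t)
        + Complex.log (p * (starRingEnd ℂ) p) := by
  have h1 := normSq_nonneg x
  have h2 := normSq_nonneg t
  have h3 := normSq_pos.2 hp
  have h4 : 0 < 1 + normSq x := by positivity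
  have h5 : 0 < 1 + normSq t := by positivity
  have e : Real.log (normSq ((((1 + normSq x) / (1 + normSq t) : ℝ) : ℂ) * p)) =
      2 * Real.log (1 + normSq x) + (-2) * Real.log (1 + normSq t) + Real.log (normSq p) := by
    rw [normSq_mul, normSq_ofReal, Real.log_mul (by positivity) h3.ne', Real.log_mul (by positivity)
      (by positivity), Real.log_div h4.ne' h5.ne']
    ring
  rw [e, mul_conj, mul_conj, mul_conj]
  push_cast [ofReal_log h4.le, ofReal_log h5.le, ofReal_log h3.le]
  rfl

/-- Popov (C₀ = C = 1): for `s` holomorphic, `φ = (1+|w|²)/(1+|s w|²) · s'(w)`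
satisfies `Δ₀h - 2Ω(1 - e^h) = 0` with `h = log|φ|²` and `Ω = 4/(1+|w|²)²`,
wherever `s'(w) ≠ 0`. -/
theorem stmt10 (U : Set ℂ) (hU : IsOpen U) (s : ℂ → ℂ)
    (hs : DifferentiableOn ℂ s U) :
    ∀ w ∈ U, deriv s w ≠ 0 →
      let φ : ℂ → ℂ := fun x =>
        (((1 + Complex.normSq x) / (1 + Complex.normSq (s x)) : ℝ) : ℂ) * deriv s x
      let h : ℂ → ℝ := fun x => Real.log (Complex.normSq (φ x))
      let Ω : ℂ → ℝ := fun x => 4 / (1 + Complex.normSq x) ^ 2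
      4 * dw (fun x => dwbar (fun y => (h y : ℂ)) x) w -
        2 * (Ω w : ℂ) * (1 - Complex.exp (h w)) = 0 := by
  intro w hw hw0 φ h Ω
  have hs1 : DifferentiableOn ℂ (deriv s) U := hs.deriv hU
  have hs2 : DifferentiableOn ℂ (deriv (deriv s)) U := hs1.deriv hU
  have D0 : ∀ x ∈ U, HasDerivAt s (deriv s x) x := fun x hx =>
    (hs.differentiableAt (hU.mem_nhds hx)).hasDerivAt
  have D1 : ∀ x ∈ U, HasDerivAt (deriv s) (deriv (deriv s) x) x := fun x hx =>
    (hs1.differentiableAt (hU.mem_nhds hx)).hasDerivAt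
  have D2 : ∀ x ∈ U, HasDerivAt (deriv (deriv s)) (deriv (deriv (deriv s)) x) x := fun x hx =>
    (hs2.differentiableAt (hU.mem_nhds hx)).hasDerivAt
  have ev : ∀ᶠ x in nhds w, x ∈ U ∧ deriv s x ≠ 0 :=
    (hU.eventually_mem hw).and ((D1 w hw).continuousAt.eventually_ne hw0)
  have B : (fun x => dwbar (fun y => (h y : ℂ)) x) =ᶠ[nhds w] fun x =>
      2 * (x * (starRingEnd ℂ) 1 * (1 + x * (starRingEnd ℂ) x)⁻¹) +
      (-2) * (s x * (starRingEnd ℂ) (deriv s x) * (1 + s x * (starRingEnd ℂ) (s x))⁻¹) +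
      (starRingEnd ℂ) (deriv (deriv s) x * (deriv s x)⁻¹) := by
    filter_upwards [ev.eventually_nhds] with x hx
    obtain ⟨hxU, hx0⟩ := hx.self_of_nhds
    obtain ⟨a1, k1⟩ := HW.log_one (hasDerivAt_id' x)
    obtain ⟨a2, k2⟩ := HW.log_one (D0 x hxU)
    obtain ⟨a3, k3⟩ := HW.log_sq (D1 x hxU) hx0
    have k := (((HW.const 2 x).mul k1).add ((HW.const (-2) x).mul k2)).add k3
    have k' := k.congr_ev (g := fun y => (h y : ℂ)) (by
      filter_upwards [hx] with y hy
      exact log_formula y (s y) (deriv s y) hy.2)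
    rw [k'.dwbar]
    simp
  obtain ⟨b1, k1⟩ := HW.second (hasDerivAt_id' w) (hasDerivAt_const w (1:ℂ)) rfl
  obtain ⟨b2, k2⟩ := HW.second (D0 w hw) (D1 w hw) rfl
  have k3 := (HW.hol ((D2 w hw).mul ((D1 w hw).inv hw0))).conj
  have k := ((((HW.const 2 w).mul k1).add ((HW.const (-2) w).mul k2)).add k3).congr_ev B
  rw [k.dw]
  have hpos : 0 < normSq (φ w) := by
    apply normSq_pos.2
    have h1 := normSq_nonneg w
    have h2 := normSq_nonneg (s w)
    refine mul_ne_zero ?_ hw0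
    exact_mod_cast (by positivity : (1 + normSq w) / (1 + normSq (s w)) ≠ 0)
  have he : Complex.exp (h w) = ((normSq (φ w) : ℝ) : ℂ) := by
    rw [← ofReal_exp, Real.exp_log hpos]
  rw [he]
  have n1 := one_add_ne w
  have n2 := one_add_ne (s w)
  simp only [φ, Ω, normSq_mul, normSq_ofReal]
  push_cast
  simp only [← mul_conj]
  simp
  field_simp
  ring
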